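/- For integers p and q with 2 ≤ p < q, the ideal of the Laurent polynomial ring ℤ[t, t⁻¹] generated by 𝔭_p(t)² and (t − 1)·𝔭_p(t) is not equal to the ideal generated by 𝔭_q(t)² and (t − 1)·𝔭_q(t). -/

import Mathlib

/-!
The geometric sums in `𝔭_p` collapse to
`𝔭_p(t) (1 − t^p) (1 − t^(p+1)) = (1 − t^(p(p+1))) (1 − t)`,
so `𝔭_p` is the Alexander polynomial of the torus knot `T(p, p + 1)`. A primitive `q(q+1)`-th root
of unity `ζ` is therefore a root of `𝔭_q`, and it is a root of `𝔭_p` only if `q(q+1) ∣ p(p+1)`.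
The common zeros of the generators `𝔭_p²` and `(t − 1)𝔭_p` are the roots of `𝔭_p`, so evaluation
at `ζ` tells the two ideals apart.
-/

open LaurentPolynomial

/-- The Laurent polynomial `𝔭_p(t) = Σ_{k=0}^{p} t^(p²−kp) − Σ_{k=0}^{p−1} t^(k(p+1)+1)`
in `ℤ[t, t⁻¹]`, where `t = T 1`. -/
noncomputable def frakP (p : ℕ) : LaurentPolynomial ℤ :=
  ∑ k ∈ Finset.range (p + 1), T ((p : ℤ) ^ 2 - (k : ℤ) * p) -
    ∑ k ∈ Finset.range p, T ((k : ℤ) * (p + 1) + 1)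

theorem frakP_eq_geom_sum_sub (p : ℕ) :
    frakP p = ∑ k ∈ Finset.range (p + 1), (T 1 ^ p) ^ k -
      T 1 * ∑ k ∈ Finset.range p, (T 1 ^ (p + 1)) ^ k := by
  rw [frakP, ← Finset.sum_range_reflect, Finset.mul_sum]
  congr 1 <;> refine Finset.sum_congr rfl fun k hk ↦ ?_
  · have hkp : k ≤ p := Nat.lt_succ_iff.mp (Finset.mem_range.mp hk)
    rw [T_pow, T_pow, Nat.add_sub_cancel, Nat.cast_sub hkp]
    congr 1
    ring
  · rw [T_pow, T_pow, ← T_add]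
    congr 1
    push_cast
    ring

theorem frakP_mul_one_sub_mul_one_sub (p : ℕ) :
    frakP p * ((1 - T 1 ^ p) * (1 - T 1 ^ (p + 1))) =
      (1 - T 1 ^ (p * (p + 1))) * (1 - T 1) := by
  have hp := geom_sum_mul_neg (T 1 ^ p : LaurentPolynomial ℤ) (p + 1)
  have hp' := geom_sum_mul_neg (T 1 ^ (p + 1) : LaurentPolynomial ℤ) p
  rw [← pow_mul] at hp hp'
  rw [mul_comm (p + 1) p] at hp'
  rw [frakP_eq_geom_sum_sub]
  linear_combination (1 - T 1 ^ (p + 1)) * hp - T 1 * (1 - T 1 ^ p) * hp'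

section RingHom

variable {R : Type*} [CommRing R] (φ : LaurentPolynomial ℤ →+* R)

theorem map_frakP_mul_one_sub_mul_one_sub (p : ℕ) :
    φ (frakP p) * ((1 - φ (T 1) ^ p) * (1 - φ (T 1) ^ (p + 1))) =
      (1 - φ (T 1) ^ (p * (p + 1))) * (1 - φ (T 1)) := by
  simpa only [map_mul, map_sub, map_one, map_pow] using
    congrArg φ (frakP_mul_one_sub_mul_one_sub p)

variable [NoZeroDivisors R] {φ}

theorem map_frakP_ne_zero {p : ℕ} (h : φ (T 1) ^ (p * (p + 1)) ≠ 1) : φ (frakP p) ≠ 0 := by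
  intro h0
  have hT : φ (T 1) ≠ 1 := fun hT ↦ h (by rw [hT, one_pow])
  have hprod := map_frakP_mul_one_sub_mul_one_sub φ p
  rw [h0, zero_mul] at hprod
  exact mul_ne_zero (sub_ne_zero.mpr h.symm) (sub_ne_zero.mpr hT.symm) hprod.symm

theorem map_frakP_eq_zero_of_isPrimitiveRoot {q : ℕ} (hq : 2 ≤ q)
    (hφ : IsPrimitiveRoot (φ (T 1)) (q * (q + 1))) : φ (frakP q) = 0 := by
  have hne {m : ℕ} (hm : m ≠ 0) (hlt : m < q * (q + 1)) : 1 - φ (T 1) ^ m ≠ 0 :=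
    sub_ne_zero.mpr (hφ.pow_ne_one_of_pos_of_lt hm hlt).symm
  have hprod := map_frakP_mul_one_sub_mul_one_sub φ q
  rw [hφ.pow_eq_one, sub_self, zero_mul] at hprod
  exact (mul_eq_zero.mp hprod).resolve_right
    (mul_ne_zero (hne (by lia) (by nlinarith)) (hne (by lia) (by nlinarith)))

end RingHom

theorem span_sq_mul_le_ker_iff {R S : Type*} [Semiring R] [Semiring S] [IsReduced S]
    (φ : R →+* S) (a s : R) : Ideal.span {a ^ 2, s * a} ≤ RingHom.ker φ ↔ φ a = 0 := by
  rw [Ideal.span_le, Set.pair_subset_iff, SetLike.mem_coe, SetLike.mem_coe, RingHom.mem_ker,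
    RingHom.mem_ker, map_pow, map_mul, pow_eq_zero_iff two_ne_zero]
  exact and_iff_left_of_imp fun h ↦ by rw [h, mul_zero]

theorem exists_ringHom_isPrimitiveRoot_T_one {n : ℕ} (hn : n ≠ 0) :
    ∃ φ : LaurentPolynomial ℤ →+* ℂ, IsPrimitiveRoot (φ (T 1)) n := by
  have hζ := Complex.isPrimitiveRoot_exp n hn
  obtain ⟨u, hu⟩ := hζ.isUnit hn
  refine ⟨eval₂ (Int.castRingHom ℂ) u, ?_⟩
  rwa [eval₂_T, zpow_one, hu]

theorem orderIdeals_distinct_general {p q : ℕ} (hq : 2 ≤ q) (hdvd : ¬q * (q + 1) ∣ p * (p + 1)) :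
    ¬Ideal.span {frakP p ^ 2, (T 1 - 1) * frakP p} ≤
      Ideal.span {frakP q ^ 2, (T 1 - 1) * frakP q} := by
  intro hle
  obtain ⟨φ, hφ⟩ := exists_ringHom_isPrimitiveRoot_T_one (n := q * (q + 1)) (by positivity)
  have hp0 : φ (frakP p) ≠ 0 := map_frakP_ne_zero (mt (hφ.pow_eq_one_iff_dvd _).mp hdvd)
  have hq0 : φ (frakP q) = 0 := map_frakP_eq_zero_of_isPrimitiveRoot hq hφ
  exact hp0 ((span_sq_mul_le_ker_iff φ _ _).mp
    (hle.trans ((span_sq_mul_le_ker_iff φ _ _).mpr hq0)))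

/-- For `2 ≤ p < q`, the ideals of `ℤ[t, t⁻¹]` generated by `𝔭_p(t)²` and
`(t − 1)𝔭_p(t)`, respectively by `𝔭_q(t)²` and `(t − 1)𝔭_q(t)`, are distinct. -/
theorem orderIdeals_distinct (p q : ℕ) (hp : 2 ≤ p) (hpq : p < q) :
    Ideal.span {frakP p ^ 2, (T 1 - 1) * frakP p} ≠
      Ideal.span {frakP q ^ 2, (T 1 - 1) * frakP q} := by
  have hdvd : ¬q * (q + 1) ∣ p * (p + 1) := Nat.not_dvd_of_pos_of_lt (by positivity) (by gcongr)
  exact fun h ↦ orderIdeals_distinct_general (hp.trans hpq.le) hdvd h.le
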